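/- Let A be a bounded invertible Mealy automaton over X with A = C(A). Then the group G_A is finite if and only if there is a constant C such that every e-orbit O^e(v), v ∈ X^*, has at most C elements. -/

import Mathlib

/-- A Mealy automaton over alphabet `X` with state set `S`:
the transition-output function sends `(s, x)` to `(output letter, next state)`. -/
structure Mealy (S X : Type*) where
  step : S → X → X × S

namespace Mealy

variable {S X : Type*}

/-- The section `s|_v`: the state reached after processing the word `v` from state `s`. -/
def sec (A : Mealy S X) (s : S) : List X → S
  | [] => s
  | x :: v => A.sec (A.step s x).2 v

/-- The action of a state on finite words (lists of letters, read left to right). -/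
def act (A : Mealy S X) (s : S) : List X → List X
  | [] => []
  | x :: v => (A.step s x).1 :: A.act (A.step s x).2 v

/-- A state is trivial if it acts on `X^*` as the identity. -/
def IsTrivialState (A : Mealy S X) (s : S) : Prop := ∀ v : List X, A.act s v = v

/-- An automaton is invertible if every state acts on the letters by a permutation. -/
def Invertible (A : Mealy S X) : Prop :=
  ∀ s : S, Function.Bijective fun x : X => (A.step s x).1

/-- The automaton group `G_A`: the subgroup of permutations of `X^*` generated by
the permutations defined by the states of `A`. -/
def autGroup (A : Mealy S X) : Subgroup (Equiv.Perm (List X)) :=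
  Subgroup.closure { f : Equiv.Perm (List X) | ∃ s : S, ∀ v : List X, f v = A.act s v }

/-- A left-infinite sequence `…x₂x₁` is encoded as `p : ℕ → X` with `p 0 = x₁`, `p 1 = x₂`, ….
It is post-critical if it is the sequence of input labels or of output labels of a
left-infinite directed path in `A` ending at a non-trivial state. -/
def IsPostCritical (A : Mealy S X) (p : ℕ → X) : Prop :=
  ∃ (σ : ℕ → S) (inp out : ℕ → X),
    (∀ n, A.step (σ (n + 1)) (inp n) = (out n, σ n)) ∧
      ¬A.IsTrivialState (σ 0) ∧ (p = inp ∨ p = out)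

/-- The post-critical set of `A`. -/
def PostCriticalSet (A : Mealy S X) : Set (ℕ → X) := { p | A.IsPostCritical p }

/-- An automaton is bounded if its post-critical set is finite. -/
def Bounded (A : Mealy S X) : Prop := A.PostCriticalSet.Finite

/-- The length-`n` suffix (as a finite word, read left to right) of a left-infinite
sequence `…x₂x₁` encoded as `p : ℕ → X`: the word `xₙ…x₂x₁`. -/
def lsuffix (p : ℕ → X) (n : ℕ) : List X := (List.range n).reverse.map p

/-- A finite word is post-critical if it is a suffix of some post-critical sequence. -/
def IsPostCriticalWord (A : Mealy S X) (v : List X) : Prop :=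
  ∃ p : ℕ → X, A.IsPostCritical p ∧ v = lsuffix p v.length

/-- The base relation for `e`-equivalence: `v ≈ u` if some state `s` satisfies
`s|_v` trivial and `s(v) = u`, or `s|_u` trivial and `s(u) = v`. -/
def ERel (A : Mealy S X) (v u : List X) : Prop :=
  ∃ s : S, (A.IsTrivialState (A.sec s v) ∧ A.act s v = u) ∨
    (A.IsTrivialState (A.sec s u) ∧ A.act s u = v)

/-- `e`-equivalence: the equivalence relation generated by `≈`. -/
def EEquiv (A : Mealy S X) : List X → List X → Prop := Relation.EqvGen A.ERel

/-- The `e`-orbit of a word. -/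
def eOrbit (A : Mealy S X) (v : List X) : Set (List X) := { u | A.EEquiv v u }

/-- The orbit of a finite word under the automaton group. -/
def orbit (A : Mealy S X) (v : List X) : Set (List X) := { u | ∃ g ∈ A.autGroup, g v = u }

/-- Reachability by a directed path in the automaton. -/
def Reaches (A : Mealy S X) : S → S → Prop :=
  Relation.ReflTransGen fun a b => ∃ x : X, (A.step a x).2 = b

/-- The states of the circuit part `C(A)`: states reachable by a directed path
from some directed cycle of `A`. -/
def circuitStates (A : Mealy S X) : Set S :=
  { s | ∃ t : S, (∃ x : X, A.Reaches (A.step t x).2 t) ∧ A.Reaches t s }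

/-- The circuit part `C(A)` as a subautomaton. -/
def circuitPart (A : Mealy S X) : Mealy A.circuitStates X where
  step s x :=
    ((A.step s.1 x).1,
      ⟨(A.step s.1 x).2, by
        obtain ⟨t, hc, hr⟩ := s.2
        exact ⟨t, hc, hr.tail ⟨x, rfl⟩⟩⟩)

/-- The subautomaton induced on a subset of states closed under transitions. -/
def subautomaton (A : Mealy S X) (T : Set S)
    (hT : ∀ s ∈ T, ∀ x : X, (A.step s x).2 ∈ T) : Mealy T X where
  step s x := ((A.step s.1 x).1, ⟨(A.step s.1 x).2, hT s.1 s.2 x⟩)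

/-- The extension of a length- and prefix-preserving map on finite words to
right-infinite sequences (letter by letter). -/
def extOmega (f : List X → List X) (w : ℕ → X) : ℕ → X :=
  fun n => (f ((List.range (n + 1)).map w)).getD n (w n)

/-- The orbit of a right-infinite sequence under the automaton group. -/
def orbitOmega (A : Mealy S X) (w : ℕ → X) : Set (ℕ → X) :=
  { w' | ∃ g ∈ A.autGroup, w' = extOmega (⇑(g : Equiv.Perm (List X))) w }

/-- The group `G_A` is level-transitive if it acts transitively on each level `X^n`. -/
def LevelTransitive (A : Mealy S X) : Prop :=
  ∀ v u : List X, v.length = u.length → ∃ g ∈ A.autGroup, g v = u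

end Mealy

/-- The run of a deterministic finite-state machine on a right-infinite input:
`dfaRun δ q₀ w n` is the state after reading the first `n` letters. -/
def dfaRun {Q X : Type*} (δ : Q → X → Q) (q₀ : Q) (w : ℕ → X) : ℕ → Q
  | 0 => q₀
  | n + 1 => δ (dfaRun δ q₀ w n) (w n)

/-- A concrete encoding of an invertible Mealy automaton (with state set `Fin n`
over alphabet `Fin k`) as a natural number. -/
def encodeAut (n k : ℕ) (step : Fin n → Fin k → Fin k × Fin n) : ℕ :=
  Nat.pair n (Nat.pair k (Encodable.encode
    ((List.finRange n).flatMap fun s =>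
      (List.finRange k).map fun x =>
        Nat.pair ((step s x).1 : ℕ) ((step s x).2 : ℕ))))

/-!
Every edge `u → s(u)` of the Schreier graph of level `n` joins two `e`-equivalent words, unless the
section `s|_u` is non-trivial. As `s` lies in the circuit part, the path from `s` to `s|_u` extends
to the left indefinitely, so in that case `u` and `s(u)` are both suffixes of post-critical
sequences. There are at most `|𝒫|` such suffixes of each length, so every orbit of the group is
covered by at most `|𝒫| + 1` `e`-orbits. A finitely generated permutation group with uniformly
bounded orbits is finite, because it has only finitely many homomorphisms to a given finite
symmetric group. Conversely, every `e`-orbit is contained in an orbit of the group.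
-/

section BoundedOrbits

theorem finite_monoidHom_of_fg (M N : Type*) [Monoid M] [Monoid N] [Monoid.FG M] [Finite N] :
    Finite (M →* N) := by
  obtain ⟨T, hclosure, hT⟩ := Monoid.fg_iff.1 ‹Monoid.FG M›
  have : Finite T := hT
  refine .of_injective (fun (φ : M →* N) (t : T) => φ t) fun φ ψ h => ?_
  exact MonoidHom.eq_of_eqOn_denseM hclosure fun t ht => congrFun h ⟨t, ht⟩

variable {G Y : Type*} [Group G] [MulAction G Y]

theorem exists_monoidHom_perm_fin_of_encard_orbit_le {K : ℕ} {y : Y}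
    (hy : (MulAction.orbit G y).encard ≤ K) :
    ∃ φ : G →* Equiv.Perm (Fin K), ∀ g k, φ g = φ k → g • y = k • y := by
  obtain ⟨hfin, hcard⟩ := Set.encard_le_coe_iff_finite_ncard_le.1 hy
  have : Fintype (MulAction.orbit G y) := hfin.fintype
  obtain ⟨ι⟩ : Nonempty (MulAction.orbit G y ↪ Fin K) :=
    Function.Embedding.nonempty_of_card_le <| by
      rwa [Fintype.card_fin, ← Nat.card_eq_fintype_card, Nat.card_coe_set_eq]
  refine ⟨(Equiv.Perm.viaEmbeddingHom ι).comp (MulAction.toPermHom G _), fun g k h => ?_⟩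
  have hperm := Equiv.Perm.viaEmbeddingHom_injective ι h
  exact congrArg Subtype.val (Equiv.congr_fun hperm ⟨y, MulAction.mem_orbit_self y⟩)

theorem finite_of_encard_orbit_le [FaithfulSMul G Y] [Group.FG G] (K : ℕ)
    (h : ∀ y : Y, (MulAction.orbit G y).encard ≤ K) : Finite G := by
  have := finite_monoidHom_of_fg G (Equiv.Perm (Fin K))
  refine .of_injective (fun (g : G) (φ : G →* Equiv.Perm (Fin K)) => φ g) fun g k hgk => ?_
  refine FaithfulSMul.eq_of_smul_eq_smul fun y : Y => ?_
  obtain ⟨φ, hφ⟩ := exists_monoidHom_perm_fin_of_encard_orbit_le (h y)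
  exact hφ g k (congrFun hgk φ)

theorem encard_orbit_le_card (y : Y) : (MulAction.orbit G y).encard ≤ ENat.card G := by
  rw [MulAction.orbit, ← Set.image_univ, ← Set.encard_univ]
  exact Set.encard_image_le _ _

end BoundedOrbits

theorem encard_biUnion_le_mul {α β : Type*} {s : Set α} (hs : s.Finite) {f : α → Set β} {c : ℕ∞}
    (hf : ∀ a ∈ s, (f a).encard ≤ c) : (⋃ a ∈ s, f a).encard ≤ s.encard * c := by
  lift s to Finset α using hs
  calc (⋃ a ∈ (s : Set α), f a).encard ≤ ∑ a ∈ s, (f a).encard := s.set_encard_biUnion_le f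
    _ ≤ s.card • c := s.sum_le_card_nsmul _ _ hf
    _ = (s : Set α).encard * c := by rw [Set.encard_coe_eq_coe_finsetCard, nsmul_eq_mul]

namespace Mealy

variable {S X : Type*} (A : Mealy S X)

section Words

theorem act_append (s : S) (v w : List X) :
    A.act s (v ++ w) = A.act s v ++ A.act (A.sec s v) w := by
  induction v generalizing s with
  | nil => rfl
  | cons x v ih => simp [act, sec, ih]

theorem sec_append (s : S) (v w : List X) : A.sec s (v ++ w) = A.sec (A.sec s v) w := by
  induction v generalizing s with
  | nil => rfl
  | cons x v ih => simp [sec, ih]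

theorem length_act (s : S) (v : List X) : (A.act s v).length = v.length := by
  induction v generalizing s with
  | nil => rfl
  | cons x v ih => simp [act, ih]

variable {A}

theorem Invertible.act_injective (hA : A.Invertible) (s : S) : Function.Injective (A.act s) := by
  intro v w h
  induction v generalizing s w with
  | nil => cases w <;> simp_all [act]
  | cons x v ih =>
    cases w with
    | nil => simp [act] at h
    | cons y w =>
      obtain ⟨hxy, hvw⟩ := List.cons_eq_cons.1 h
      obtain rfl := (hA s).1 hxy
      rw [ih _ hvw]

theorem Invertible.act_surjective (hA : A.Invertible) (s : S) :
    Function.Surjective (A.act s) := by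
  intro w
  induction w generalizing s with
  | nil => exact ⟨[], rfl⟩
  | cons y w ih =>
    obtain ⟨x, hx⟩ := (hA s).2 y
    obtain ⟨v, hv⟩ := ih (A.step s x).2
    exact ⟨x :: v, congrArg₂ List.cons hx hv⟩

end Words

section AutGroup

variable {A} (hA : A.Invertible)

/-- The permutation of `X^*` defined by a state of an invertible automaton. -/
noncomputable def toPerm (s : S) : Equiv.Perm (List X) :=
  .ofBijective (A.act s) ⟨hA.act_injective s, hA.act_surjective s⟩

theorem autGroup_eq_closure_range_toPerm :
    A.autGroup = Subgroup.closure (Set.range (toPerm hA)) := by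
  refine congrArg Subgroup.closure (Set.ext fun f => exists_congr fun s => ?_)
  exact ⟨fun h => Equiv.ext fun v => (h v).symm, fun h v => h ▸ rfl⟩

theorem toPerm_mem_autGroup (s : S) : toPerm hA s ∈ A.autGroup :=
  Subgroup.subset_closure ⟨s, fun _ => rfl⟩

include hA in
theorem fg_autGroup [Finite S] : Group.FG A.autGroup := by
  rw [autGroup_eq_closure_range_toPerm hA]
  infer_instance

include hA in
theorem act_mem_orbit (s : S) (v : List X) : A.act s v ∈ MulAction.orbit A.autGroup v :=
  ⟨⟨toPerm hA s, toPerm_mem_autGroup hA s⟩, rfl⟩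

include hA in
theorem eOrbit_subset_orbit (v : List X) : A.eOrbit v ⊆ MulAction.orbit A.autGroup v := by
  have hle : Relation.EqvGen.setoid A.ERel ≤ MulAction.orbitRel A.autGroup (List X) := by
    refine Setoid.eqvGen_le fun v u h => ?_
    obtain ⟨s, ⟨-, rfl⟩ | ⟨-, rfl⟩⟩ := h
    · exact Setoid.symm' _ (act_mem_orbit hA s v)
    · exact act_mem_orbit hA s u
  exact fun u hu => Setoid.symm' _ (hle hu)

end AutGroup

section PostCritical

/-- `A.IsLeftPath σ inp out` says that `… → σ 2 → σ 1 → σ 0` is a left-infinite directed path of `A`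
whose edge from `σ (n + 1)` to `σ n` has input label `inp n` and output label `out n`. -/
def IsLeftPath (σ : ℕ → S) (inp out : ℕ → X) : Prop :=
  ∀ n, A.step (σ (n + 1)) (inp n) = (out n, σ n)

/-- The left-infinite sequence `…a₂a₁a` obtained by appending `a` to `p = …a₂a₁` on the right,
that is, at index `0`. -/
def snoc {α : Type*} (p : ℕ → α) (a : α) : ℕ → α
  | 0 => a
  | n + 1 => p n

theorem lsuffix_snoc (p : ℕ → X) (x : X) (n : ℕ) :
    lsuffix (snoc p x) (n + 1) = lsuffix p n ++ [x] := by
  simp [lsuffix, List.range_succ_eq_map, snoc, Function.comp_def]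

variable {A}

theorem IsLeftPath.snoc {σ : ℕ → S} {inp out : ℕ → X} (h : A.IsLeftPath σ inp out) (x : X) :
    A.IsLeftPath (snoc σ (A.step (σ 0) x).2) (snoc inp x) (snoc out (A.step (σ 0) x).1)
  | 0 => rfl
  | n + 1 => h n

theorem IsLeftPath.exists_extend {σ : ℕ → S} {inp out : ℕ → X} (h : A.IsLeftPath σ inp out)
    (v : List X) :
    ∃ σ' inp' out', A.IsLeftPath σ' inp' out' ∧ σ' 0 = A.sec (σ 0) v ∧
      lsuffix inp' v.length = v ∧ lsuffix out' v.length = A.act (σ 0) v := by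
  induction v using List.reverseRecOn with
  | nil => exact ⟨σ, inp, out, h, rfl, rfl, rfl⟩
  | append_singleton v x ih =>
    obtain ⟨σ', inp', out', hpath, hend, hinp, hout⟩ := ih
    refine ⟨_, _, _, hpath.snoc x, ?_, ?_, ?_⟩
    · rw [sec_append, ← hend]
      rfl
    · rw [List.length_append, List.length_singleton, lsuffix_snoc, hinp]
    · rw [List.length_append, List.length_singleton, lsuffix_snoc, hout, act_append, ← hend]
      rfl

theorem exists_step_eq_of_circuitStates (s : A.circuitStates) :
    ∃ (t : A.circuitStates) (x : X), (A.step t x).2 = s := by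
  obtain ⟨s, c, ⟨x, hcycle⟩, hreach⟩ := s
  have hpos : Relation.TransGen (fun a b => ∃ y, (A.step a y).2 = b) c s :=
    .head' ⟨x, rfl⟩ (hcycle.trans hreach)
  obtain ⟨t, hct, hts⟩ := Relation.TransGen.tail'_iff.1 hpos
  exact ⟨⟨t, c, ⟨x, hcycle⟩, hct⟩, hts⟩

theorem exists_isLeftPath_of_mem_circuitStates {s : S} (hs : s ∈ A.circuitStates) :
    ∃ σ inp out, A.IsLeftPath σ inp out ∧ σ 0 = s := by
  choose pred letter hstep using exists_step_eq_of_circuitStates (A := A)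
  let σ : ℕ → A.circuitStates := fun n => pred^[n] ⟨s, hs⟩
  have hσ (n : ℕ) : σ (n + 1) = pred (σ n) := Function.iterate_succ_apply' pred n _
  refine ⟨fun n => σ n, fun n => letter (σ n), fun n => (A.step (σ (n + 1)) (letter (σ n))).1,
    fun n => Prod.ext rfl ?_, rfl⟩
  simpa only [hσ] using hstep (σ n)

theorem isPostCriticalWord_of_not_isTrivialState_sec {s : S} (hs : s ∈ A.circuitStates)
    {v : List X} (hv : ¬A.IsTrivialState (A.sec s v)) :
    A.IsPostCriticalWord v ∧ A.IsPostCriticalWord (A.act s v) := by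
  obtain ⟨σ₀, inp₀, out₀, hpath₀, rfl⟩ := exists_isLeftPath_of_mem_circuitStates hs
  obtain ⟨σ, inp, out, hpath, hend, hinp, hout⟩ := hpath₀.exists_extend v
  rw [← hend] at hv
  refine ⟨⟨inp, ⟨σ, inp, out, hpath, hv, .inl rfl⟩, hinp.symm⟩,
    ⟨out, ⟨σ, inp, out, hpath, hv, .inr rfl⟩, ?_⟩⟩
  rw [length_act, hout]

theorem eEquiv_act_or_isPostCriticalWord {s : S} (hs : s ∈ A.circuitStates) (v : List X) :
    A.EEquiv v (A.act s v) ∨ A.IsPostCriticalWord v ∧ A.IsPostCriticalWord (A.act s v) := by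
  by_cases hv : A.IsTrivialState (A.sec s v)
  · exact .inl (.rel _ _ ⟨s, .inl ⟨hv, rfl⟩⟩)
  · exact .inr (isPostCriticalWord_of_not_isTrivialState_sec hs hv)

variable (A) in
/-- The post-critical words of length `n`. -/
def postCriticalWords (n : ℕ) : Set (List X) :=
  { w | A.IsPostCriticalWord w ∧ w.length = n }

theorem postCriticalWords_subset_image_lsuffix (n : ℕ) :
    A.postCriticalWords n ⊆ (lsuffix · n) '' A.PostCriticalSet := by
  rintro w ⟨⟨p, hp, hw⟩, rfl⟩
  exact ⟨p, hp, hw.symm⟩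

theorem encard_postCriticalWords_le (n : ℕ) :
    (A.postCriticalWords n).encard ≤ A.PostCriticalSet.encard :=
  (Set.encard_le_encard (postCriticalWords_subset_image_lsuffix n)).trans (Set.encard_image_le _ _)

end PostCritical

section OrbitCover

variable {A}

theorem EEquiv.length_eq {v u : List X} (h : A.EEquiv v u) : v.length = u.length := by
  refine Setoid.eqvGen_le (s := Setoid.ker List.length) (fun v u h => ?_) h
  obtain ⟨s, ⟨-, rfl⟩ | ⟨-, rfl⟩⟩ := h
  · exact (A.length_act s v).symm
  · exact A.length_act s u

variable (A) in
/-- The union of the `e`-orbits of `v` and of the post-critical words of the same length. It is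
invariant under the automaton group when `A = C(A)`, so it bounds the orbit of `v`. -/
def eOrbitCover (v : List X) : Set (List X) :=
  ⋃ w ∈ insert v (A.postCriticalWords v.length), A.eOrbit w

theorem mem_eOrbitCover {v u : List X} :
    u ∈ A.eOrbitCover v ↔ ∃ w ∈ insert v (A.postCriticalWords v.length), A.EEquiv w u := by
  simp only [eOrbitCover, eOrbit, Set.mem_iUnion₂, Set.mem_ofPred_eq, exists_prop]

theorem self_mem_eOrbitCover (v : List X) : v ∈ A.eOrbitCover v :=
  mem_eOrbitCover.2 ⟨v, Set.mem_insert v _, .refl v⟩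

theorem length_eq_of_mem_eOrbitCover {v u : List X} (hu : u ∈ A.eOrbitCover v) :
    u.length = v.length := by
  obtain ⟨w, rfl | ⟨-, hw⟩, h⟩ := mem_eOrbitCover.1 hu
  · exact h.length_eq.symm
  · exact h.length_eq.symm.trans hw

theorem IsPostCriticalWord.mem_eOrbitCover {v u : List X} (hu : A.IsPostCriticalWord u)
    (hlen : u.length = v.length) : u ∈ A.eOrbitCover v :=
  Mealy.mem_eOrbitCover.2 ⟨u, .inr ⟨hu, hlen⟩, .refl u⟩

theorem EEquiv.mem_eOrbitCover {v u w : List X} (h : A.EEquiv u w) (hu : u ∈ A.eOrbitCover v) :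
    w ∈ A.eOrbitCover v := by
  obtain ⟨r, hr, hru⟩ := Mealy.mem_eOrbitCover.1 hu
  exact Mealy.mem_eOrbitCover.2 ⟨r, hr, hru.trans _ _ _ h⟩

theorem act_mem_eOrbitCover_iff {s : S} (hs : s ∈ A.circuitStates) {v u : List X} :
    A.act s u ∈ A.eOrbitCover v ↔ u ∈ A.eOrbitCover v := by
  rcases eEquiv_act_or_isPostCriticalWord hs u with h | ⟨hu, hsu⟩
  · exact ⟨EEquiv.mem_eOrbitCover (h.symm _ _), h.mem_eOrbitCover⟩
  · exact ⟨fun h => hu.mem_eOrbitCover (A.length_act s u ▸ length_eq_of_mem_eOrbitCover h),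
      fun h => hsu.mem_eOrbitCover ((A.length_act s u).trans (length_eq_of_mem_eOrbitCover h))⟩

open scoped Pointwise in
theorem orbit_subset_eOrbitCover (hA : A.Invertible) (hCA : ∀ s, s ∈ A.circuitStates)
    (v : List X) : MulAction.orbit A.autGroup v ⊆ A.eOrbitCover v := by
  have hle : A.autGroup ≤ MulAction.stabilizer (Equiv.Perm (List X)) (A.eOrbitCover v) := by
    rw [autGroup_eq_closure_range_toPerm hA, Subgroup.closure_le]
    rintro _ ⟨s, rfl⟩
    exact MulAction.mem_stabilizer_set.2 fun u => act_mem_eOrbitCover_iff (hCA s)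
  rintro _ ⟨⟨g, hg⟩, rfl⟩
  exact (MulAction.mem_stabilizer_set.1 (hle hg) v).2 (self_mem_eOrbitCover v)

theorem Bounded.encard_eOrbitCover_le (hA : A.Bounded) {c : ℕ∞}
    (hc : ∀ w, (A.eOrbit w).encard ≤ c) (v : List X) :
    (A.eOrbitCover v).encard ≤ (A.PostCriticalSet.encard + 1) * c := by
  have hfin : (A.postCriticalWords v.length).Finite :=
    (hA.image _).subset (postCriticalWords_subset_image_lsuffix _)
  calc (A.eOrbitCover v).encard
      ≤ (insert v (A.postCriticalWords v.length)).encard * c :=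
        encard_biUnion_le_mul (hfin.insert v) fun w _ => hc w
    _ ≤ (A.PostCriticalSet.encard + 1) * c := by
        gcongr
        exact (Set.encard_insert_le _ _).trans (by gcongr; exact encard_postCriticalWords_le _)

end OrbitCover

variable {A}

theorem encard_eOrbit_le_card_autGroup (hA : A.Invertible) (v : List X) :
    (A.eOrbit v).encard ≤ ENat.card A.autGroup :=
  (Set.encard_le_encard (eOrbit_subset_orbit hA v)).trans (encard_orbit_le_card v)

theorem finite_autGroup_of_encard_eOrbit_le [Finite S] (hInv : A.Invertible) (hBdd : A.Bounded)
    (hCA : ∀ s, s ∈ A.circuitStates) {C : ℕ} (hC : ∀ v, (A.eOrbit v).encard ≤ C) :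
    Finite A.autGroup := by
  have := fg_autGroup hInv
  refine finite_of_encard_orbit_le (Y := List X) ((A.PostCriticalSet.ncard + 1) * C) fun v => ?_
  have hP : (A.PostCriticalSet.ncard : ℕ∞) = A.PostCriticalSet.encard := hBdd.cast_ncard_eq
  push_cast
  rw [hP]
  exact (Set.encard_le_encard (orbit_subset_eOrbitCover hInv hCA v)).trans
    (hBdd.encard_eOrbitCover_le hC v)

end Mealy

theorem finite_iff_eOrbits_uniformly_bounded_general {S X : Type*} [Finite S] (A : Mealy S X)
    (hInv : A.Invertible) (hBdd : A.Bounded) (hCA : ∀ s : S, s ∈ A.circuitStates) :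
    Finite A.autGroup ↔
      ∃ C : ℕ, ∀ v : List X, (A.eOrbit v).Finite ∧ (A.eOrbit v).ncard ≤ C := by
  simp only [← Set.encard_le_coe_iff_finite_ncard_le]
  constructor
  · intro hfin
    refine ⟨Nat.card A.autGroup, fun v => ?_⟩
    rw [← ENat.card_eq_coe_natCard]
    exact Mealy.encard_eOrbit_le_card_autGroup hInv v
  · rintro ⟨C, hC⟩
    exact Mealy.finite_autGroup_of_encard_eOrbit_le hInv hBdd hCA hC

/-- For a bounded invertible automaton with `A = C(A)`, `G_A` is finite
iff the `e`-orbits are uniformly bounded. -/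
theorem finite_iff_eOrbits_uniformly_bounded {S X : Type*} [Fintype S] [Fintype X]
    (hX : 2 ≤ Fintype.card X) (A : Mealy S X) (hInv : A.Invertible)
    (hBdd : A.Bounded) (hCA : ∀ s : S, s ∈ A.circuitStates) :
    Finite A.autGroup ↔
      ∃ C : ℕ, ∀ v : List X, (A.eOrbit v).Finite ∧ (A.eOrbit v).ncard ≤ C :=
  finite_iff_eOrbits_uniformly_bounded_general A hInv hBdd hCA
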